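/- arXiv:1311.6348 — 9 statements merged into one kernel-verified Lean document; each statement's English description precedes it below -/
import Mathlib

section
/- For every λ with 0 < λ < √6, the characteristic polynomial of the Jacobian matrix of the constraint-reduced vector field G(Ψ,Φ) = ((3Ψ²−3)Ψ − (√6·λ/2)·Φ², (3Ψ² + (√6·λ/2)·Ψ)·Φ) at the power-law fixed point 𝒫₁ = (−λ/√6, √((6−λ²)/6)) equals (X − λ²)·(X − (λ²−6)/2); in particular the Jacobian has the eigenvalue (λ²−6)/2 = −(6−λ²)/2, which is strictly negative for all λ ∈ (0,√6). -/
/-!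
At `𝒫₁` the relations `Ψ² = λ²/6`, `√6 Ψ = -λ` and `Φ² = (6 - λ²)/6` make the lower right entry of
the Jacobian vanish. Its trace is then `3λ²/2 - 3 = λ² + (λ² - 6)/2` and its determinant
`√6 λ Φ² (6Ψ + √6 λ/2) = -3λ²Φ² = λ² (λ² - 6)/2`, and these two numbers determine the
characteristic polynomial of a 2 × 2 matrix.
-/

open Polynomial

/-- The constraint-reduced background vector field
`G(Ψ,Φ) = ((3Ψ²−3)Ψ − (√6·λ/2)Φ², (3Ψ² + (√6·λ/2)Ψ)Φ)`
for one scalar field with exponential potential, in coordinates `x 0 = Ψ`, `x 1 = Φ`. -/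
noncomputable def expBackgroundField (lam : ℝ) (x : Fin 2 → ℝ) : Fin 2 → ℝ :=
  ![(3 * (x 0) ^ 2 - 3) * x 0 - (Real.sqrt 6 * lam / 2) * (x 1) ^ 2,
    (3 * (x 0) ^ 2 + (Real.sqrt 6 * lam / 2) * x 0) * x 1]

/-- The Jacobian matrix of `expBackgroundField` at a point `P`. -/
noncomputable def expBackgroundJacobian (lam : ℝ) (P : Fin 2 → ℝ) :
    Matrix (Fin 2) (Fin 2) ℝ :=
  Matrix.of fun i j => fderiv ℝ (fun x => expBackgroundField lam x i) P (Pi.single j 1)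

/-- The partial derivatives of the background field; it is polynomial, so `fderiv` takes no junk
value. -/
lemma expBackgroundJacobian_eq (lam : ℝ) (P : Fin 2 → ℝ) :
    expBackgroundJacobian lam P =
      !![9 * (P 0) ^ 2 - 3, -(Real.sqrt 6 * lam * P 1);
        (6 * P 0 + Real.sqrt 6 * lam / 2) * P 1,
        3 * (P 0) ^ 2 + Real.sqrt 6 * lam / 2 * P 0] := by
  have hp : ∀ i : Fin 2, HasFDerivAt (fun x : Fin 2 → ℝ => x i)
      (ContinuousLinearMap.proj (R := ℝ) (φ := fun _ : Fin 2 => ℝ) i) P :=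
    fun i => hasFDerivAt_apply i P
  have h0 := (((((hp 0).pow 2).const_mul 3).sub_const 3).mul (hp 0)).sub
    (((hp 1).pow 2).const_mul (Real.sqrt 6 * lam / 2))
  have h1 := ((((hp 0).pow 2).const_mul 3).add
    ((hp 0).const_mul (Real.sqrt 6 * lam / 2))).mul (hp 1)
  have e0 : fderiv ℝ (fun x => expBackgroundField lam x 0) P = _ := h0.fderiv
  have e1 : fderiv ℝ (fun x => expBackgroundField lam x 1) P = _ := h1.fderiv
  ext i j
  fin_cases i <;> fin_cases j <;>
    simp [expBackgroundJacobian, e0, e1] <;> ring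

/-- For `0 < λ < √6`, the characteristic polynomial of the Jacobian of the
constraint-reduced background field at the power-law fixed point
`𝒫₁ = (−λ/√6, √((6−λ²)/6))` is `(X − λ²)(X − (λ²−6)/2)`; in particular
`(λ²−6)/2` is an eigenvalue (a root of the characteristic polynomial) and it is
strictly negative. -/
theorem powerlaw_point_charpoly (lam : ℝ) (hl : 0 < lam) (hl6 : lam < Real.sqrt 6) :
    (expBackgroundJacobian lam
        ![-lam / Real.sqrt 6, Real.sqrt ((6 - lam ^ 2) / 6)]).charpoly =
      (X - C (lam ^ 2)) * (X - C ((lam ^ 2 - 6) / 2)) ∧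
    (expBackgroundJacobian lam
        ![-lam / Real.sqrt 6, Real.sqrt ((6 - lam ^ 2) / 6)]).charpoly.IsRoot
      ((lam ^ 2 - 6) / 2) ∧
    (lam ^ 2 - 6) / 2 < 0 := by
  have hs : Real.sqrt 6 ^ 2 = 6 := Real.sq_sqrt (by norm_num)
  have hs0 : Real.sqrt 6 ≠ 0 := by positivity
  have hlt : lam ^ 2 < 6 := by nlinarith [Real.sqrt_nonneg 6]
  have hΦ : Real.sqrt ((6 - lam ^ 2) / 6) ^ 2 = (6 - lam ^ 2) / 6 :=
    Real.sq_sqrt (by linarith)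
  have hΨ : (-lam / Real.sqrt 6) ^ 2 = lam ^ 2 / 6 := by rw [div_pow, hs, neg_sq]
  have hsΨ : Real.sqrt 6 * (-lam / Real.sqrt 6) = -lam := by field_simp
  have hchar : (expBackgroundJacobian lam
        ![-lam / Real.sqrt 6, Real.sqrt ((6 - lam ^ 2) / 6)]).charpoly =
      (X - C (lam ^ 2)) * (X - C ((lam ^ 2 - 6) / 2)) := by
    rw [expBackgroundJacobian_eq, Matrix.charpoly_fin_two, Matrix.trace_fin_two,
      Matrix.det_fin_two]
    simp only [Matrix.of_apply, Matrix.cons_val', Matrix.cons_val_zero, Matrix.cons_val_one,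
      Matrix.cons_val_fin_one]
    generalize Real.sqrt ((6 - lam ^ 2) / 6) = Φ at *
    generalize -lam / Real.sqrt 6 = Ψ at *
    generalize Real.sqrt 6 = s at *
    have htr : 9 * Ψ ^ 2 - 3 + (3 * Ψ ^ 2 + s * lam / 2 * Ψ) = lam ^ 2 + (lam ^ 2 - 6) / 2 := by
      linear_combination 12 * hΨ + lam / 2 * hsΨ
    have hdet : (9 * Ψ ^ 2 - 3) * (3 * Ψ ^ 2 + s * lam / 2 * Ψ) -
        -(s * lam * Φ) * ((6 * Ψ + s * lam / 2) * Φ) = lam ^ 2 * ((lam ^ 2 - 6) / 2) := by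
      -- The lower right entry vanishes, so only the off-diagonal product contributes.
      have hz : 3 * Ψ ^ 2 + s * lam / 2 * Ψ = 0 := by
        linear_combination 3 * hΨ + lam / 2 * hsΨ
      linear_combination (9 * Ψ ^ 2 - 3) * hz + 6 * lam * Φ ^ 2 * hsΨ +
        lam ^ 2 * Φ ^ 2 / 2 * hs - 3 * lam ^ 2 * hΦ
    rw [htr, hdet, C_add, C_mul]
    ring
  refine ⟨hchar, ?_, by linarith⟩
  rw [hchar]
  simp [IsRoot]
end

section
/- Let 0 < λ₁ < √6 and 0 < λ₂ < √6, and define λ > 0 by 1/λ² = 1/λ₁² + 1/λ₂². The set of zeros of the vector field F(Ψ₁,Ψ₂,Φ₁,Φ₂) = ((q−2)Ψ₁ − (√6·λ₁/2)Φ₁², (q−2)Ψ₂ − (√6·λ₂/2)Φ₂², (q+1)Φ₁ + (√6·λ₁/2)Ψ₁Φ₁, (q+1)Φ₂ + (√6·λ₂/2)Ψ₂Φ₂), where q = 2(Ψ₁²+Ψ₂²) − (Φ₁²+Φ₂²), lying in the state space S = {Ψ₁,Ψ₂ ∈ [−1,0], Φ₁,Φ₂ ∈ [0,1], Ψ₁²+Ψ₂²+Φ₁²+Φ₂²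 = 1} is exactly the union of: (a) the one-parameter family 𝒫₀ = (−Ψ₀, −√(1−Ψ₀²), 0, 0) for Ψ₀ ∈ [0,1]; (b) 𝒫₁ = (−λ₁/√6, 0, √((6−λ₁²)/6), 0); (c) 𝒫₂ = (0, −λ₂/√6, 0, √((6−λ₂²)/6)); and (d) 𝒫₃ = (−λ²/(√6 λ₁), −λ²/(√6 λ₂), √(λ²(6−λ²))/(√6 λ₁), √(λ²(6−λ²))/(√6 λ₂)). -/
/-!
On the constraint surface put `X = Ψ₁² + Ψ₂²`. Then `Φ₁² + Φ₂² = 1 - X`, `q - 2 = -3(1 - X)` and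
`q + 1 = 3X`, so a zero of the field satisfies, for `A = 1, 2`,
`3(1 - X)Ψ_A = -(√6 λ_A / 2)Φ_A²` and `Φ_A = 0` or `3X = -(√6 λ_A / 2)Ψ_A`.
The classification splits on which `Φ_A` vanish. If both do, then `X = 1`, which is the family `𝒫₀`.
If only `Φ_B` vanishes, then `1 - X ≠ 0` forces `Ψ_B = 0`, and the first equation for the other field
with the constraint gives `𝒫₁` or `𝒫₂` (`single_field`). If neither does, then
`λ₁Ψ₁ = λ₂Ψ₂ = c` with `X = c²/λ²`, whence `c = -λ²/√6`; the first pair of equations then yields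
`Φ_A²`, and this is `𝒫₃` (`both_fields`). Conversely the box constraints at the listed points follow
from the signs and the Friedman constraint (`box_of_signs`), and the rest is substitution.
-/

/-- With `Φ₁ > 0 = Φ₂` the equations leave only the single-field power-law point. Here `s` stands
for `√6`, and the lemma serves both fields by symmetry. -/
lemma single_field {s l x y u : ℝ} (hs : 0 < s) (hs2 : s ^ 2 = 6) (hu : 0 < u)
    (hc : x ^ 2 + y ^ 2 + u ^ 2 = 1)
    (e1 : (2 * (x ^ 2 + y ^ 2) - u ^ 2 - 2) * x - (s * l / 2) * u ^ 2 = 0)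
    (e2 : (2 * (x ^ 2 + y ^ 2) - u ^ 2 - 2) * y = 0) :
    x = -l / s ∧ y = 0 ∧ u = Real.sqrt ((6 - l ^ 2) / 6) := by
  have hu2 : u ^ 2 ≠ 0 := by positivity
  have hq : 2 * (x ^ 2 + y ^ 2) - u ^ 2 - 2 = -3 * u ^ 2 := by linarith
  rw [hq] at e1 e2
  have hy : y = 0 := by
    rcases mul_eq_zero.1 e2 with h | h
    · exact absurd (by linarith) hu2
    · exact h
  have hx : 6 * x + s * l = 0 := by
    have : u ^ 2 * (6 * x + s * l) = 0 := by linarith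
    exact (mul_eq_zero.1 this).resolve_left hu2
  have hx' : x = -l / s := by
    rw [eq_div_iff hs.ne']
    have : s * (x * s + l) = 0 := by linear_combination hx + x * hs2
    linarith [(mul_eq_zero.1 this).resolve_left hs.ne']
  refine ⟨hx', hy, ?_⟩
  have hx2 : x ^ 2 = l ^ 2 / 6 := by rw [hx', div_pow, hs2]; ring
  rw [hy, hx2] at hc
  have hu6 : (6 - l ^ 2) / 6 = u ^ 2 := by linarith
  rw [hu6, Real.sqrt_sq hu.le]

/-- With both `Φ₁, Φ₂ > 0` the equations leave only the assisted power-law point. Here `s` stands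
for `√6`, and `hL` is the defining relation of `λ` cleared of denominators. -/
lemma both_fields {s l1 l2 l x y u v : ℝ} (hs : 0 < s) (hs2 : s ^ 2 = 6)
    (h1 : 0 < l1) (h2 : 0 < l2)
    (hL : l ^ 2 * (l1 ^ 2 + l2 ^ 2) = l1 ^ 2 * l2 ^ 2)
    (hu : 0 < u) (hv : 0 < v)
    (hc : x ^ 2 + y ^ 2 + u ^ 2 + v ^ 2 = 1)
    (e1 : (2 * (x ^ 2 + y ^ 2) - (u ^ 2 + v ^ 2) - 2) * x - (s * l1 / 2) * u ^ 2 = 0)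
    (e2 : (2 * (x ^ 2 + y ^ 2) - (u ^ 2 + v ^ 2) - 2) * y - (s * l2 / 2) * v ^ 2 = 0)
    (e3 : (2 * (x ^ 2 + y ^ 2) - (u ^ 2 + v ^ 2) + 1) * u + (s * l1 / 2) * x * u = 0)
    (e4 : (2 * (x ^ 2 + y ^ 2) - (u ^ 2 + v ^ 2) + 1) * v + (s * l2 / 2) * y * v = 0) :
    x = -l ^ 2 / (s * l1) ∧ y = -l ^ 2 / (s * l2) ∧
      u = Real.sqrt (l ^ 2 * (6 - l ^ 2)) / (s * l1) ∧
      v = Real.sqrt (l ^ 2 * (6 - l ^ 2)) / (s * l2) := by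
  have f3 : 6 * (x ^ 2 + y ^ 2) + s * l1 * x = 0 := by
    have : u * (6 * (x ^ 2 + y ^ 2) + s * l1 * x) = 0 := by
      linear_combination 2 * e3 + 2 * u * hc
    exact (mul_eq_zero.1 this).resolve_left hu.ne'
  have f4 : 6 * (x ^ 2 + y ^ 2) + s * l2 * y = 0 := by
    have : v * (6 * (x ^ 2 + y ^ 2) + s * l2 * y) = 0 := by
      linear_combination 2 * e4 + 2 * v * hc
    exact (mul_eq_zero.1 this).resolve_left hv.ne'
  obtain ⟨c, hcx⟩ : ∃ c, c = l1 * x := ⟨_, rfl⟩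
  have hcy : c = l2 * y := by
    have : s * (l1 * x - l2 * y) = 0 := by linear_combination f3 - f4
    linarith [(mul_eq_zero.1 this).resolve_left hs.ne']
  have hX : l ^ 2 * (x ^ 2 + y ^ 2) = c ^ 2 := by
    have : (l1 ^ 2 * l2 ^ 2) * (l ^ 2 * (x ^ 2 + y ^ 2) - c ^ 2) = 0 := by
      have hx2 : l1 ^ 2 * x ^ 2 = c ^ 2 := by rw [hcx]; ring
      have hy2 : l2 ^ 2 * y ^ 2 = c ^ 2 := by rw [hcy]; ring
      linear_combination c ^ 2 * hL + l ^ 2 * l2 ^ 2 * hx2 + l ^ 2 * l1 ^ 2 * hy2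
    linarith [(mul_eq_zero.1 this).resolve_left (by positivity)]
  have hc0 : c ≠ 0 := by
    intro h0
    have hx0 : x = 0 := by
      rw [h0] at hcx
      exact (mul_eq_zero.1 hcx.symm).resolve_left h1.ne'
    rw [hx0] at e1
    have : 0 < s * l1 / 2 * u ^ 2 := by positivity
    linarith
  have hcs : c * s = -l ^ 2 := by
    have : c * s * (c * s + l ^ 2) = 0 := by
      linear_combination c ^ 2 * hs2 - 6 * hX + l ^ 2 * f3 + l ^ 2 * s * hcx
    linarith [(mul_eq_zero.1 this).resolve_left (mul_ne_zero hc0 hs.ne')]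
  have hX6 : 6 * (x ^ 2 + y ^ 2) = l ^ 2 := by
    linear_combination f3 + s * hcx - hcs
  have hu2 : (u * (s * l1)) ^ 2 = l ^ 2 * (6 - l ^ 2) := by
    linear_combination (-2 * s * l1) * e1 + 2 * s * l1 * x * (-hc + hX6 / 2)
      + (6 - l ^ 2) * (s * hcx - hcs)
  have hv2 : (v * (s * l2)) ^ 2 = l ^ 2 * (6 - l ^ 2) := by
    linear_combination (-2 * s * l2) * e2 + 2 * s * l2 * y * (-hc + hX6 / 2)
      + (6 - l ^ 2) * (s * hcy - hcs)
  refine ⟨?_, ?_, ?_, ?_⟩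
  · rw [eq_div_iff (by positivity)]
    linear_combination hcs - s * hcx
  · rw [eq_div_iff (by positivity)]
    linear_combination hcs - s * hcy
  · rw [eq_div_iff (by positivity), ← hu2, Real.sqrt_sq (by positivity)]
  · rw [eq_div_iff (by positivity), ← hv2, Real.sqrt_sq (by positivity)]

lemma box_of_signs {x y u v : ℝ} (hx : x ≤ 0) (hy : y ≤ 0) (hu : 0 ≤ u) (hv : 0 ≤ v)
    (hc : x ^ 2 + y ^ 2 + u ^ 2 + v ^ 2 = 1) :
    -1 ≤ x ∧ x ≤ 0 ∧ -1 ≤ y ∧ y ≤ 0 ∧ 0 ≤ u ∧ u ≤ 1 ∧ 0 ≤ v ∧ v ≤ 1 ∧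
      x ^ 2 + y ^ 2 + u ^ 2 + v ^ 2 = 1 := by
  refine ⟨?_, hx, ?_, hy, hu, ?_, hv, ?_, hc⟩ <;>
    nlinarith [sq_nonneg x, sq_nonneg y, sq_nonneg u, sq_nonneg v]

/-- Fixed points of assisted power-law inflation.  For `0 < λ₁, λ₂ < √6` and
`λ > 0` with `1/λ² = 1/λ₁² + 1/λ₂²`, the zeros of the two-field background vector
field `F(Ψ₁,Ψ₂,Φ₁,Φ₂)`, with deceleration parameter
`q = 2(Ψ₁²+Ψ₂²) − (Φ₁²+Φ₂²)`, lying in the state space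
`{Ψ₁,Ψ₂ ∈ [−1,0], Φ₁,Φ₂ ∈ [0,1], Ψ₁²+Ψ₂²+Φ₁²+Φ₂² = 1}` are exactly the
one-parameter family `𝒫₀` together with `𝒫₁`, `𝒫₂`, `𝒫₃`. -/
theorem assisted_powerlaw_fixed_points (lam1 lam2 lam : ℝ)
    (h1 : 0 < lam1) (h1' : lam1 < Real.sqrt 6)
    (h2 : 0 < lam2) (h2' : lam2 < Real.sqrt 6)
    (hlam : 0 < lam) (hdef : 1 / lam ^ 2 = 1 / lam1 ^ 2 + 1 / lam2 ^ 2) :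
    {p : ℝ × ℝ × ℝ × ℝ |
      (-1 ≤ p.1 ∧ p.1 ≤ 0 ∧ -1 ≤ p.2.1 ∧ p.2.1 ≤ 0 ∧
       0 ≤ p.2.2.1 ∧ p.2.2.1 ≤ 1 ∧ 0 ≤ p.2.2.2 ∧ p.2.2.2 ≤ 1 ∧
       p.1 ^ 2 + p.2.1 ^ 2 + p.2.2.1 ^ 2 + p.2.2.2 ^ 2 = 1) ∧
      (2 * (p.1 ^ 2 + p.2.1 ^ 2) - (p.2.2.1 ^ 2 + p.2.2.2 ^ 2) - 2) * p.1 -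
          (Real.sqrt 6 * lam1 / 2) * p.2.2.1 ^ 2 = 0 ∧
      (2 * (p.1 ^ 2 + p.2.1 ^ 2) - (p.2.2.1 ^ 2 + p.2.2.2 ^ 2) - 2) * p.2.1 -
          (Real.sqrt 6 * lam2 / 2) * p.2.2.2 ^ 2 = 0 ∧
      (2 * (p.1 ^ 2 + p.2.1 ^ 2) - (p.2.2.1 ^ 2 + p.2.2.2 ^ 2) + 1) * p.2.2.1 +
          (Real.sqrt 6 * lam1 / 2) * p.1 * p.2.2.1 = 0 ∧
      (2 * (p.1 ^ 2 + p.2.1 ^ 2) - (p.2.2.1 ^ 2 + p.2.2.2 ^ 2) + 1) * p.2.2.2 +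
          (Real.sqrt 6 * lam2 / 2) * p.2.1 * p.2.2.2 = 0} =
    {p : ℝ × ℝ × ℝ × ℝ |
      (∃ Ψ0 : ℝ, 0 ≤ Ψ0 ∧ Ψ0 ≤ 1 ∧
        p = (-Ψ0, -Real.sqrt (1 - Ψ0 ^ 2), 0, 0)) ∨
      p = (-lam1 / Real.sqrt 6, 0, Real.sqrt ((6 - lam1 ^ 2) / 6), 0) ∨
      p = (0, -lam2 / Real.sqrt 6, 0, Real.sqrt ((6 - lam2 ^ 2) / 6)) ∨
      p = (-lam ^ 2 / (Real.sqrt 6 * lam1), -lam ^ 2 / (Real.sqrt 6 * lam2),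
           Real.sqrt (lam ^ 2 * (6 - lam ^ 2)) / (Real.sqrt 6 * lam1),
           Real.sqrt (lam ^ 2 * (6 - lam ^ 2)) / (Real.sqrt 6 * lam2))} := by
  have hs : 0 < Real.sqrt 6 := by positivity
  have hs2 : Real.sqrt 6 ^ 2 = 6 := Real.sq_sqrt (by norm_num)
  have hL : lam ^ 2 * (lam1 ^ 2 + lam2 ^ 2) = lam1 ^ 2 * lam2 ^ 2 := by
    field_simp at hdef
    linarith
  have hl1 : lam1 ^ 2 < 6 := by nlinarith
  have hl2 : lam2 ^ 2 < 6 := by nlinarith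
  have hl : lam ^ 2 < 6 := by
    -- `λ² < λ₁²`, as `λ²(λ₁² + λ₂²) = λ₁²λ₂²` and `λ²λ₁² > 0`.
    have hpos : 0 < lam ^ 2 * lam1 ^ 2 := by positivity
    have hlt : lam ^ 2 < lam1 ^ 2 :=
      lt_of_mul_lt_mul_right (a := lam2 ^ 2) (by linarith) (by positivity)
    linarith
  generalize Real.sqrt 6 = s at *
  ext ⟨x, y, u, v⟩
  simp only [Set.mem_ofPred_eq, Prod.mk.injEq]
  constructor
  · rintro ⟨⟨hx1, hx0, hy1, hy0, hu0, hu1, hv0, hv1, hc⟩, e1, e2, e3, e4⟩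
    rcases hu0.eq_or_lt with rfl | hu <;> rcases hv0.eq_or_lt with rfl | hv
    · refine Or.inl ⟨-x, by linarith, by linarith, by ring, ?_, rfl, rfl⟩
      have : 1 - (-x) ^ 2 = (-y) ^ 2 := by linarith
      rw [this, Real.sqrt_sq (by linarith), neg_neg]
    · obtain ⟨hy, hx, hv'⟩ := single_field (l := lam2) (x := y) (y := x) hs hs2 hv
        (by linarith) (by linear_combination e2) (by linear_combination e1)
      exact Or.inr (Or.inr (Or.inl ⟨hx, hy, rfl, hv'⟩))
    · obtain ⟨hx, hy, hu'⟩ := single_field (l := lam1) (x := x) (y := y) hs hs2 hu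
        (by linarith) (by linear_combination e1) (by linear_combination e2)
      exact Or.inr (Or.inl ⟨hx, hy, hu', rfl⟩)
    · exact Or.inr (Or.inr (Or.inr
        (both_fields hs hs2 h1 h2 hL hu hv hc e1 e2 e3 e4)))
  · rintro (⟨t, ht0, ht1, rfl, rfl, rfl, rfl⟩ | ⟨hx, rfl, hu, rfl⟩ | ⟨rfl, hy, rfl, hv⟩ |
      ⟨hx, hy, hu, hv⟩)
    · have hr : Real.sqrt (1 - t ^ 2) ^ 2 = 1 - t ^ 2 := Real.sq_sqrt (by nlinarith)
      have hr0 := Real.sqrt_nonneg (1 - t ^ 2)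
      generalize Real.sqrt (1 - t ^ 2) = r at *
      refine ⟨box_of_signs (by linarith) (by linarith) le_rfl le_rfl
        (by linear_combination hr), ?_, ?_, by ring, by ring⟩
      · linear_combination (-2 * t) * hr
      · linear_combination (-2 * r) * hr
    · have hu2 : u ^ 2 = (6 - lam1 ^ 2) / 6 := by rw [hu, Real.sq_sqrt (by linarith)]
      have hu0 : 0 ≤ u := hu ▸ Real.sqrt_nonneg _
      have hxs : s * x = -lam1 := by rw [hx]; field_simp
      have hx2 : x ^ 2 = lam1 ^ 2 / 6 := by rw [hx, div_pow, hs2]; ring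
      have hx6 : s * lam1 = -6 * x := by linear_combination s * hxs - x * hs2
      have hx0 : x ≤ 0 := by nlinarith
      refine ⟨box_of_signs hx0 le_rfl hu0 le_rfl (by linarith), ?_, by ring, ?_, by ring⟩
      · rw [hx6, hu2, hx2]; ring
      · rw [hx6]; linear_combination (-u) * (hu2 + hx2)
    · have hv2 : v ^ 2 = (6 - lam2 ^ 2) / 6 := by rw [hv, Real.sq_sqrt (by linarith)]
      have hv0 : 0 ≤ v := hv ▸ Real.sqrt_nonneg _
      have hys : s * y = -lam2 := by rw [hy]; field_simp
      have hy2 : y ^ 2 = lam2 ^ 2 / 6 := by rw [hy, div_pow, hs2]; ring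
      have hy6 : s * lam2 = -6 * y := by linear_combination s * hys - y * hs2
      have hy0 : y ≤ 0 := by nlinarith
      refine ⟨box_of_signs le_rfl hy0 le_rfl hv0 (by linarith), by ring, ?_, by ring, ?_⟩
      · rw [hy6, hv2, hy2]; ring
      · rw [hy6]; linear_combination (-v) * (hv2 + hy2)
    · have hR : Real.sqrt (lam ^ 2 * (6 - lam ^ 2)) ^ 2 = lam ^ 2 * (6 - lam ^ 2) :=
        Real.sq_sqrt (mul_nonneg (by positivity) (by linarith))
      have hR0 := Real.sqrt_nonneg (lam ^ 2 * (6 - lam ^ 2))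
      generalize Real.sqrt (lam ^ 2 * (6 - lam ^ 2)) = R at *
      have hu0 : 0 ≤ u := by rw [hu]; positivity
      have hv0 : 0 ≤ v := by rw [hv]; positivity
      have hx0 : x ≤ 0 := by rw [hx, neg_div]; exact neg_nonpos.2 (by positivity)
      have hy0 : y ≤ 0 := by rw [hy, neg_div]; exact neg_nonpos.2 (by positivity)
      have hsx : s * lam1 * x = -lam ^ 2 := by rw [hx]; field_simp
      have hsy : s * lam2 * y = -lam ^ 2 := by rw [hy]; field_simp
      have hX : x ^ 2 + y ^ 2 = lam ^ 2 / 6 := by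
        rw [hx, hy, div_pow, div_pow, mul_pow, mul_pow, hs2]
        field_simp
        linear_combination hL
      -- `6Φ_A² = -(6 - λ²) · √6 Ψ_A / λ_A`, kept free of division by `λ_A`.
      have hux : s * lam1 * u ^ 2 = -(6 - lam ^ 2) * x := by
        rw [hu, hx, div_pow, hR]; field_simp
      have hvy : s * lam2 * v ^ 2 = -(6 - lam ^ 2) * y := by
        rw [hv, hy, div_pow, hR]; field_simp
      have hU : u ^ 2 + v ^ 2 = 1 - lam ^ 2 / 6 := by
        rw [hu, hv, div_pow, div_pow, mul_pow, mul_pow, hs2, hR]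
        field_simp
        linear_combination (6 - lam ^ 2) * hL
      refine ⟨box_of_signs hx0 hy0 hu0 hv0 (by linarith), ?_, ?_, ?_, ?_⟩ <;> rw [hX, hU]
      · linear_combination (-1 / 2) * hux
      · linear_combination (-1 / 2) * hvy
      · linear_combination (u / 2) * hsx
      · linear_combination (v / 2) * hsy
end

section
/- Let λ₁, λ₂ > 0 and Ψ₀ ∈ [0,1]. The characteristic polynomial of the Jacobian matrix of the constraint-reduced vector field G(Ψ₁,Ψ₂,Φ₁,Φ₂) = ((3(Ψ₁²+Ψ₂²)−3)Ψ₁ − (√6·λ₁/2)Φ₁², (3(Ψ₁²+Ψ₂²)−3)Ψ₂ − (√6·λ₂/2)Φ₂², (3(Ψ₁²+Ψ₂²) + (√6·λ₁/2)Ψ₁)Φ₁, (3(Ψ₁²+Ψ₂²) + (√6·λ₂/2)Ψ₂)Φ₂) at the massless fixed point 𝒫₀ = (−Ψ₀, −√(1−Ψ₀²), 0, 0) equals X·(X − 6)·(X − (3 − (√6/2)λ₁Ψ₀))·(X − (3 − (√6/2)λ₂√(1−Ψ₀²))); i.e. its eigenvalues are 6, 0, 3 − (√6/2)λ₁Ψ₀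 and 3 − (√6/2)λ₂√(1−Ψ₀²). -/
/-!
At a massless point the Jacobian is block diagonal (`twoFieldJacobian_massless`). Since
`Ψ₁² + Ψ₂² = 1` there, its `Ψ`-block is the rank-one matrix `6 Ψ Ψᵀ`, with trace `6` and
determinant `0`, which contributes `X (X - 6)`; the two diagonal entries of the `Φ`-block are the
remaining eigenvalues.
-/

open Polynomial

/-- The constraint-reduced background vector field for two non-interacting scalar
fields with independent exponential potentials, in coordinates
`x 0 = Ψ₁`, `x 1 = Ψ₂`, `x 2 = Φ₁`, `x 3 = Φ₂`. -/
noncomputable def twoFieldBackground (lam1 lam2 : ℝ) (x : Fin 4 → ℝ) : Fin 4 → ℝ :=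
  ![(3 * ((x 0) ^ 2 + (x 1) ^ 2) - 3) * x 0 - (Real.sqrt 6 * lam1 / 2) * (x 2) ^ 2,
    (3 * ((x 0) ^ 2 + (x 1) ^ 2) - 3) * x 1 - (Real.sqrt 6 * lam2 / 2) * (x 3) ^ 2,
    (3 * ((x 0) ^ 2 + (x 1) ^ 2) + (Real.sqrt 6 * lam1 / 2) * x 0) * x 2,
    (3 * ((x 0) ^ 2 + (x 1) ^ 2) + (Real.sqrt 6 * lam2 / 2) * x 1) * x 3]

/-- The Jacobian matrix of `twoFieldBackground` at a point `P`. -/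
noncomputable def twoFieldJacobian (lam1 lam2 : ℝ) (P : Fin 4 → ℝ) :
    Matrix (Fin 4) (Fin 4) ℝ :=
  Matrix.of fun i j => fderiv ℝ (fun x => twoFieldBackground lam1 lam2 x i) P (Pi.single j 1)

/-- Where both potentials vanish, the Jacobian is block diagonal: the `Ψ`-block is that of
`Ψ ↦ (3‖Ψ‖² - 3) Ψ`, and the `Φ`-block is diagonal. -/
lemma twoFieldJacobian_massless (lam1 lam2 a b : ℝ) :
    twoFieldJacobian lam1 lam2 ![a, b, 0, 0] =
      !![9 * a ^ 2 + 3 * b ^ 2 - 3, 6 * a * b, 0, 0;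
         6 * a * b, 3 * a ^ 2 + 9 * b ^ 2 - 3, 0, 0;
         0, 0, 3 * (a ^ 2 + b ^ 2) + Real.sqrt 6 * lam1 / 2 * a, 0;
         0, 0, 0, 3 * (a ^ 2 + b ^ 2) + Real.sqrt 6 * lam2 / 2 * b] := by
  have hp (k : Fin 4) : HasFDerivAt (fun x : Fin 4 → ℝ => x k)
      (ContinuousLinearMap.proj (R := ℝ) (φ := fun _ : Fin 4 => ℝ) k) ![a, b, 0, 0] :=
    hasFDerivAt_apply k _
  have hs := (((hp 0).pow 2).add ((hp 1).pow 2)).const_mul 3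
  have e0 := (((hs.sub_const 3).mul (hp 0)).sub
    (((hp 2).pow 2).const_mul (Real.sqrt 6 * lam1 / 2))).fderiv
  have e1 := (((hs.sub_const 3).mul (hp 1)).sub
    (((hp 3).pow 2).const_mul (Real.sqrt 6 * lam2 / 2))).fderiv
  have e2 := ((hs.add ((hp 0).const_mul (Real.sqrt 6 * lam1 / 2))).mul (hp 2)).fderiv
  have e3 := ((hs.add ((hp 1).const_mul (Real.sqrt 6 * lam2 / 2))).mul (hp 3)).fderiv
  ext i j
  fin_cases i
  · refine (congrArg (fun L => L (Pi.single j 1)) e0).trans ?_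
    fin_cases j <;> simp <;> ring
  · refine (congrArg (fun L => L (Pi.single j 1)) e1).trans ?_
    fin_cases j <;> simp <;> ring
  · refine (congrArg (fun L => L (Pi.single j 1)) e2).trans ?_
    fin_cases j <;> simp
  · refine (congrArg (fun L => L (Pi.single j 1)) e3).trans ?_
    fin_cases j <;> simp

lemma charpoly_block (a b d e f : ℝ) :
    (!![a, b, 0, 0; b, d, 0, 0; 0, 0, e, 0; 0, 0, 0, f] : Matrix (Fin 4) (Fin 4) ℝ).charpoly =
      ((X - C a) * (X - C d) - C b ^ 2) * (X - C e) * (X - C f) := by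
  rw [Matrix.charpoly, Matrix.det_succ_row_zero]
  simp [Fin.sum_univ_succ, Matrix.det_fin_three, Matrix.charmatrix_apply, Fin.succAbove]
  ring

/-- For `λ₁, λ₂ > 0` and `Ψ₀ ∈ [0,1]`, the characteristic polynomial of the
Jacobian at the massless fixed point `𝒫₀ = (−Ψ₀, −√(1−Ψ₀²), 0, 0)` is
`X(X−6)(X − (3 − (√6/2)λ₁Ψ₀))(X − (3 − (√6/2)λ₂√(1−Ψ₀²)))`; i.e. its eigenvalues
are `6`, `0`, `3 − (√6/2)λ₁Ψ₀` and `3 − (√6/2)λ₂√(1−Ψ₀²)`. -/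
theorem massless_family_charpoly (lam1 lam2 Ψ0 : ℝ)
    (h1 : 0 < lam1) (h2 : 0 < lam2) (h0 : 0 ≤ Ψ0) (h0' : Ψ0 ≤ 1) :
    (twoFieldJacobian lam1 lam2
        ![-Ψ0, -Real.sqrt (1 - Ψ0 ^ 2), 0, 0]).charpoly =
      X * (X - C (6 : ℝ)) *
        (X - C (3 - Real.sqrt 6 / 2 * lam1 * Ψ0)) *
        (X - C (3 - Real.sqrt 6 / 2 * lam2 * Real.sqrt (1 - Ψ0 ^ 2))) := by
  set s := Real.sqrt (1 - Ψ0 ^ 2) with hs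
  have hs2 : s ^ 2 = 1 - Ψ0 ^ 2 := Real.sq_sqrt (by nlinarith)
  have ha : 9 * (-Ψ0) ^ 2 + 3 * (-s) ^ 2 - 3 = 6 * Ψ0 ^ 2 := by linear_combination 3 * hs2
  have hb : 6 * (-Ψ0) * (-s) = 6 * Ψ0 * s := by ring
  have hd : 3 * (-Ψ0) ^ 2 + 9 * (-s) ^ 2 - 3 = 6 * s ^ 2 := by linear_combination 3 * hs2
  have he : 3 * ((-Ψ0) ^ 2 + (-s) ^ 2) + Real.sqrt 6 * lam1 / 2 * (-Ψ0) =
      3 - Real.sqrt 6 / 2 * lam1 * Ψ0 := by linear_combination 3 * hs2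
  have hf : 3 * ((-Ψ0) ^ 2 + (-s) ^ 2) + Real.sqrt 6 * lam2 / 2 * (-s) =
      3 - Real.sqrt 6 / 2 * lam2 * s := by linear_combination 3 * hs2
  rw [twoFieldJacobian_massless, charpoly_block, ha, hb, hd, he, hf]
  congr 2
  have hC : (C s : ℝ[X]) ^ 2 = 1 - C Ψ0 ^ 2 := by
    rw [← C_pow, hs2, C_sub, C_1, C_pow]
  have h6 : (C 6 : ℝ[X]) = 6 := rfl
  simp only [C_mul, C_pow, h6]
  linear_combination (-6 * X) * hC
end

section
/- Let 0 < λ₁ < √6 and λ₂ > 0. The characteristic polynomial of the Jacobian matrix of the constraint-reduced vector field G(Ψ₁,Ψ₂,Φ₁,Φ₂) = ((3(Ψ₁²+Ψ₂²)−3)Ψ₁ − (√6·λ₁/2)Φ₁², (3(Ψ₁²+Ψ₂²)−3)Ψ₂ − (√6·λ₂/2)Φ₂², (3(Ψ₁²+Ψ₂²) + (√6·λ₁/2)Ψ₁)Φ₁, (3(Ψ₁²+Ψ₂²) + (√6·λ₂/2)Ψ₂)Φ₂) at the single-field power-law fixed point 𝒫₁ = (−λ₁/√6, 0, √((6−λ₁²)/6),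 0) equals (X − λ₁²/2)·(X − λ₁²)·(X − (λ₁²−6)/2)²; i.e. its eigenvalues, with multiplicity, are λ₁²/2, λ₁², and (λ₁²−6)/2 with multiplicity two. -/
/-!
At `𝒫₁` the second field vanishes (`Ψ₂ = Φ₂ = 0`), so the Jacobian splits into the diagonal entries
`(λ₁² - 6) / 2` and `λ₁² / 2` belonging to the second field, and a `2 × 2` block in `(Ψ₁, Φ₁)` with
trace `3 λ₁² / 2 - 3` and determinant `λ₁² (λ₁² - 6) / 2`, whose eigenvalues are therefore `λ₁²` and
`(λ₁² - 6) / 2`. The Jacobian is computed in `twoFieldJacobian_eq` and the splitting of the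
characteristic polynomial is `charpoly_decoupled`.
-/

open Polynomial

/-- The Jacobian matrix at an arbitrary point, in closed form. -/
theorem twoFieldJacobian_eq (lam1 lam2 : ℝ) (P : Fin 4 → ℝ) :
    twoFieldJacobian lam1 lam2 P =
      !![9 * P 0 ^ 2 + 3 * P 1 ^ 2 - 3, 6 * P 0 * P 1, -(Real.sqrt 6 * lam1 * P 2), 0;
        6 * P 0 * P 1, 3 * P 0 ^ 2 + 9 * P 1 ^ 2 - 3, 0, -(Real.sqrt 6 * lam2 * P 3);
        (6 * P 0 + Real.sqrt 6 * lam1 / 2) * P 2, 6 * P 1 * P 2,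
          3 * (P 0 ^ 2 + P 1 ^ 2) + Real.sqrt 6 * lam1 / 2 * P 0, 0;
        6 * P 0 * P 3, (6 * P 1 + Real.sqrt 6 * lam2 / 2) * P 3, 0,
          3 * (P 0 ^ 2 + P 1 ^ 2) + Real.sqrt 6 * lam2 / 2 * P 1] := by
  have e : ∀ i : Fin 4, HasFDerivAt (fun x : Fin 4 → ℝ => x i)
      (ContinuousLinearMap.proj (R := ℝ) (φ := fun _ : Fin 4 => ℝ) i) P :=
    fun i => hasFDerivAt_apply i P
  have q := (((e 0).pow 2).add ((e 1).pow 2)).const_mul 3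
  have g0 := ((q.sub_const 3).mul (e 0)).sub (((e 2).pow 2).const_mul (Real.sqrt 6 * lam1 / 2))
  have g1 := ((q.sub_const 3).mul (e 1)).sub (((e 3).pow 2).const_mul (Real.sqrt 6 * lam2 / 2))
  have g2 := (q.add ((e 0).const_mul (Real.sqrt 6 * lam1 / 2))).mul (e 2)
  have g3 := (q.add ((e 1).const_mul (Real.sqrt 6 * lam2 / 2))).mul (e 3)
  have f0 : fderiv ℝ (fun x => twoFieldBackground lam1 lam2 x 0) P = _ := g0.fderiv
  have f1 : fderiv ℝ (fun x => twoFieldBackground lam1 lam2 x 1) P = _ := g1.fderiv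
  have f2 : fderiv ℝ (fun x => twoFieldBackground lam1 lam2 x 2) P = _ := g2.fderiv
  have f3 : fderiv ℝ (fun x => twoFieldBackground lam1 lam2 x 3) P = _ := g3.fderiv
  ext i j
  fin_cases i <;> simp only [twoFieldJacobian, Matrix.of_apply, Fin.zero_eta, Fin.mk_one,
    Fin.reduceFinMk, f0, f1, f2, f3] <;> fin_cases j <;> simp <;> ring

/-- At a point with the sparsity pattern of the fixed point, the two fields decouple: the second
field contributes the diagonal entries `d` and `e`, the first field a `2 × 2` block. -/
theorem charpoly_decoupled (a b c d e : ℝ) :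
    (!![a, 0, b, 0; 0, d, 0, 0; c, 0, 0, 0; 0, 0, 0, e] : Matrix (Fin 4) (Fin 4) ℝ).charpoly =
      (X - C d) * (X - C e) * ((X - C a) * X - C (b * c)) := by
  simp [Matrix.charpoly, Matrix.charmatrix, Matrix.det_succ_row_zero, Fin.sum_univ_succ,
    Fin.succAbove]
  ring

/-- For `0 < λ₁ < √6` and `λ₂ > 0`, the characteristic polynomial of the Jacobian
at the single-field power-law fixed point `𝒫₁ = (−λ₁/√6, 0, √((6−λ₁²)/6), 0)` is
`(X − λ₁²/2)(X − λ₁²)(X − (λ₁²−6)/2)²`; i.e. its eigenvalues (with multiplicity)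
are `λ₁²/2`, `λ₁²`, and `(λ₁²−6)/2` twice. -/
theorem single_field_powerlaw_charpoly (lam1 lam2 : ℝ)
    (h1 : 0 < lam1) (h1' : lam1 < Real.sqrt 6) (h2 : 0 < lam2) :
    (twoFieldJacobian lam1 lam2
        ![-lam1 / Real.sqrt 6, 0, Real.sqrt ((6 - lam1 ^ 2) / 6), 0]).charpoly =
      (X - C (lam1 ^ 2 / 2)) * (X - C (lam1 ^ 2)) *
        (X - C ((lam1 ^ 2 - 6) / 2)) ^ 2 := by
  have hs : Real.sqrt 6 ^ 2 = 6 := Real.sq_sqrt (by norm_num)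
  have hs0 : Real.sqrt 6 ≠ 0 := by positivity
  have hlt : lam1 ^ 2 < 6 := by nlinarith
  -- The hypothesis `λ₁ < √6` makes the radicand nonnegative.
  have hc : Real.sqrt ((6 - lam1 ^ 2) / 6) ^ 2 = (6 - lam1 ^ 2) / 6 :=
    Real.sq_sqrt (by linarith)
  set s := Real.sqrt 6 with hsdef
  set c := Real.sqrt ((6 - lam1 ^ 2) / 6)
  have hp : (-lam1 / s) ^ 2 = lam1 ^ 2 / 6 := by rw [div_pow, hs, neg_sq]
  have hsp : s * (-lam1 / s) = -lam1 := by field_simp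
  set p := -lam1 / s
  have hJ : twoFieldJacobian lam1 lam2 ![p, 0, c, 0] =
      !![3 * lam1 ^ 2 / 2 - 3, 0, -(s * lam1 * c), 0; 0, (lam1 ^ 2 - 6) / 2, 0, 0;
        (6 * p + s * lam1 / 2) * c, 0, 0, 0; 0, 0, 0, lam1 ^ 2 / 2] := by
    rw [twoFieldJacobian_eq, ← hsdef]
    ext i j
    fin_cases i <;> fin_cases j <;> simp [hp] <;>
      first | ring1 | linear_combination (lam1 / 2) * hsp
  have hbc : -(s * lam1 * c) * ((6 * p + s * lam1 / 2) * c) =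
      lam1 ^ 2 * (6 - lam1 ^ 2) / 2 := by
    linear_combination (-6 * lam1 * c ^ 2) * hsp - (lam1 ^ 2 * c ^ 2 / 2) * hs +
      3 * lam1 ^ 2 * hc
  rw [hJ, charpoly_decoupled, hbc]
  -- The quadratic factor of the first field has roots `λ₁²` and `(λ₁² - 6) / 2`.
  have hq : (X - C (3 * lam1 ^ 2 / 2 - 3)) * X - C (lam1 ^ 2 * (6 - lam1 ^ 2) / 2) =
      (X - C (lam1 ^ 2)) * (X - C ((lam1 ^ 2 - 6) / 2)) := by
    have hsum : 3 * lam1 ^ 2 / 2 - 3 = lam1 ^ 2 + (lam1 ^ 2 - 6) / 2 := by ring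
    have hprod : lam1 ^ 2 * (6 - lam1 ^ 2) / 2 = -(lam1 ^ 2 * ((lam1 ^ 2 - 6) / 2)) := by ring
    rw [hsum, hprod, C_neg, C_add, C_mul]
    ring
  rw [hq]
  ring
end

section
/- Let 0 < χ < π/2, and let x₀ = (1 + 2 cos(2χ/3))/3 and x₋₁ = (1 + 2 cos(2(χ−π)/3))/3 be the two physical roots of the cubic X³ − X² + (M/3)⁴ with M⁴ = 12 sin²(χ). Define ω(x) = (9/2)x − 3. Then ω(x₀) = −3/2 + 3 cos(2χ/3) > 0 and ω(x₋₁) = −3/2 + 3 cos(2(χ−π)/3) < 0; i.e. the fixed point 𝒫₀ is a source and 𝒫₁ is a sink. Moreover, at χ = π/2 the two roots coincide, x₀ = x₋₁ = 2/3, and ω(2/3) = 0. -/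
/-- For `0 < χ < π/2`, with `x₀ = (1 + 2cos(2χ/3))/3` and
`x₋₁ = (1 + 2cos(2(χ−π)/3))/3` the two physical roots of the quartic fixed-point
cubic, the eigenvalue `ω(x) = (9/2)x − 3` satisfies
`ω(x₀) = −3/2 + 3cos(2χ/3) > 0` and `ω(x₋₁) = −3/2 + 3cos(2(χ−π)/3) < 0`;
i.e. `𝒫₀` is a source and `𝒫₁` is a sink.  Moreover at `χ = π/2` the two roots
coincide, both equal to `2/3`, and `ω(2/3) = 0`. -/
theorem quartic_eigenvalues (χ x0 xm1 : ℝ) (h0 : 0 < χ) (h1 : χ < Real.pi / 2)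
    (hx0 : x0 = (1 + 2 * Real.cos (2 * χ / 3)) / 3)
    (hxm1 : xm1 = (1 + 2 * Real.cos (2 * (χ - Real.pi) / 3)) / 3) :
    (9 / 2 * x0 - 3 = -3 / 2 + 3 * Real.cos (2 * χ / 3) ∧
      0 < 9 / 2 * x0 - 3) ∧
    (9 / 2 * xm1 - 3 = -3 / 2 + 3 * Real.cos (2 * (χ - Real.pi) / 3) ∧
      9 / 2 * xm1 - 3 < 0) ∧
    ((1 + 2 * Real.cos (2 * (Real.pi / 2) / 3)) / 3 = 2 / 3 ∧
     (1 + 2 * Real.cos (2 * (Real.pi / 2 - Real.pi) / 3)) / 3 = 2 / 3 ∧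
     (9 : ℝ) / 2 * (2 / 3) - 3 = 0) := by
  have hpi := Real.pi_pos
  -- `cos` is strictly decreasing on `[0, π]`, and both angles are compared with `π / 3`.
  have hc0 : 1 / 2 < Real.cos (2 * χ / 3) := by
    rw [← Real.cos_pi_div_three]
    exact Real.cos_lt_cos_of_nonneg_of_le_pi (by linarith) (by linarith) (by linarith)
  -- Evenness of `cos` moves the second angle to `2 (π - χ) / 3`, which lies in `(π / 3, 2 π / 3)`.
  have hc1 : Real.cos (2 * (χ - Real.pi) / 3) < 1 / 2 := by
    rw [← Real.cos_pi_div_three, ← Real.cos_neg (2 * (χ - Real.pi) / 3)]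
    exact Real.cos_lt_cos_of_nonneg_of_le_pi (by linarith) (by linarith) (by linarith)
  have e0 : 2 * (Real.pi / 2) / 3 = Real.pi / 3 := by ring
  have e1 : 2 * (Real.pi / 2 - Real.pi) / 3 = -(Real.pi / 3) := by ring
  subst hx0 hxm1
  rw [e0, e1, Real.cos_neg, Real.cos_pi_div_three]
  refine ⟨⟨by ring, by linarith⟩, ⟨by ring, by linarith⟩, by norm_num, by norm_num, by norm_num⟩
end

section
/- Let 0 < χ < π/2 and let Ψ²_{𝒫₁} = (1 + 2 cos(2(χ−π)/3))/3 be the squared kinetic coordinate of the attractor fixed point for the quartic potential. Then the following are equivalent: (i) Ψ²_{𝒫₁} < 1/3 (the attractor is inflationary); (ii) χ < π/4; (iii) M⁴ < 6, where M⁴ = 12 sin²(χ). -/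
/-!
Both equivalences locate an angle of `[0, π]` relative to `π/2`, the only zero of the strictly
decreasing function `cos` there. For (i), the angle is `2(π - χ)/3`, since `Ψ² < 1/3` says that its
cosine is negative. For (iii), it is `2χ`, since `M⁴ = 12 sin²χ = 6 - 6 cos 2χ`.
-/

/-- For `0 < χ < π/2` and `M⁴ = 12 sin²χ`, letting
`Ψ²_{𝒫₁} = (1 + 2cos(2(χ−π)/3))/3` be the squared kinetic coordinate of the
quartic attractor, the following are equivalent:
(i) `Ψ²_{𝒫₁} < 1/3` (the attractor is inflationary); (ii) `χ < π/4`;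
(iii) `M⁴ < 6`. -/
theorem quartic_attractor_inflationary (χ M : ℝ) (h0 : 0 < χ)
    (h1 : χ < Real.pi / 2) (hM : M ^ 4 = 12 * Real.sin χ ^ 2) :
    ((1 + 2 * Real.cos (2 * (χ - Real.pi) / 3)) / 3 < 1 / 3 ↔ χ < Real.pi / 4) ∧
    (χ < Real.pi / 4 ↔ M ^ 4 < 6) := by
  have hpi := Real.pi_pos
  have hmid : Real.pi / 2 ∈ Set.Icc 0 Real.pi := ⟨by linarith, by linarith⟩
  have hneg : Real.cos (2 * (Real.pi - χ) / 3) < 0 ↔ Real.pi / 2 < 2 * (Real.pi - χ) / 3 := by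
    have h := Real.strictAntiOn_cos.lt_iff_gt
      (show 2 * (Real.pi - χ) / 3 ∈ Set.Icc 0 Real.pi from ⟨by linarith, by linarith⟩) hmid
    rwa [Real.cos_pi_div_two] at h
  have hpos : 0 < Real.cos (2 * χ) ↔ 2 * χ < Real.pi / 2 := by
    have h := Real.strictAntiOn_cos.lt_iff_gt hmid
      (show 2 * χ ∈ Set.Icc 0 Real.pi from ⟨by linarith, by linarith⟩)
    rwa [Real.cos_pi_div_two] at h
  have heven : Real.cos (2 * (χ - Real.pi) / 3) = Real.cos (2 * (Real.pi - χ) / 3) := by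
    rw [← Real.cos_neg]
    ring_nf
  have hM4 : M ^ 4 = 6 - 6 * Real.cos (2 * χ) := by
    rw [hM, Real.sin_sq_eq_half_sub]
    ring
  rw [heven, hM4]
  constructor
  · constructor
    · intro h
      linarith [hneg.1 (by linarith)]
    · intro h
      linarith [hneg.2 (by linarith)]
  · constructor
    · intro h
      linarith [hpos.2 (by linarith)]
    · intro h
      linarith [hpos.1 (by linarith)]
end

section
/- Let λ > 0 and s ≥ 0, and set ξ = 5 − (3/2)λ² and ζ = 6 − 4λ² + λ⁴/2 + s (the perturbation coefficients at the power-law fixed point 𝒫₁ of the exponential potential). Then: (a) ξ² − 4ζ = 1 + λ² + λ⁴/4 − 4s = (1 + λ²/2)² − 4s, so the perturbation fixed points U± = (−ξ ± √(ξ²−4ζ))/2 exist (are real) if and only if s ≤ (1 + λ²/2)²/4; (b) if in addition 0 < λ < √2, then ξ > 0 and ζ > 0, and hence U⁺ < 0 for every s with 0 ≤ 4s ≤ (1 + λ²/2)²; i.e. in the inflationary regime all density perturbation modes for which fixed points exist decay. -/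
/-!
The discriminant identity is polynomial, and the reality criterion is a restatement of it.
For `λ² < 2` both `ξ` and `ζ = (2 - λ²)(6 - λ²)/2 + s` are positive; then
`√(ξ² - 4ζ) < ξ`, which says that the larger root `U⁺` is negative.
-/

/-- Perturbations at the power-law fixed point of the exponential potential.
For `λ > 0`, `s ≥ 0`, `ξ = 5 − (3/2)λ²` and `ζ = 6 − 4λ² + λ⁴/2 + s`:
(a) `ξ² − 4ζ = (1 + λ²/2)² − 4s`, so the perturbation fixed points
`U± = (−ξ ± √(ξ²−4ζ))/2` are real iff `s ≤ (1 + λ²/2)²/4`;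
(b) if moreover `0 < λ < √2` then `ξ > 0` and `ζ > 0`, hence `U⁺ < 0` whenever
`4s ≤ (1 + λ²/2)²`: in the inflationary regime all modes with existing fixed
points decay. -/
theorem exp_potential_perturbations (lam s ξ ζ : ℝ) (hl : 0 < lam) (hs : 0 ≤ s)
    (hξ : ξ = 5 - 3 / 2 * lam ^ 2)
    (hζ : ζ = 6 - 4 * lam ^ 2 + lam ^ 4 / 2 + s) :
    (ξ ^ 2 - 4 * ζ = (1 + lam ^ 2 / 2) ^ 2 - 4 * s) ∧
    (ξ ^ 2 - 4 * ζ ≥ 0 ↔ s ≤ (1 + lam ^ 2 / 2) ^ 2 / 4) ∧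
    (lam < Real.sqrt 2 →
      0 < ξ ∧ 0 < ζ ∧
      (4 * s ≤ (1 + lam ^ 2 / 2) ^ 2 →
        (-ξ + Real.sqrt (ξ ^ 2 - 4 * ζ)) / 2 < 0)) := by
  have hdisc : ξ ^ 2 - 4 * ζ = (1 + lam ^ 2 / 2) ^ 2 - 4 * s := by
    subst hξ hζ; ring
  refine ⟨hdisc, ?_, ?_⟩
  · rw [hdisc]
    constructor <;> intro h <;> linarith
  · intro hlam
    have hsq : lam ^ 2 < 2 := (Real.lt_sqrt hl.le).1 hlam
    have hξpos : 0 < ξ := by rw [hξ]; linarith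
    have hζpos : 0 < ζ := by
      -- ζ = (2 - λ²)(6 - λ²)/2 + s, and both factors are positive for λ² < 2.
      have hfac : 0 < (2 - lam ^ 2) * (6 - lam ^ 2) :=
        mul_pos (by linarith) (by linarith)
      rw [hζ]
      nlinarith
    refine ⟨hξpos, hζpos, fun _ => ?_⟩
    -- As ζ > 0, the discriminant lies below ξ², so its square root lies below ξ.
    have hroot : Real.sqrt (ξ ^ 2 - 4 * ζ) < ξ :=
      (Real.sqrt_lt' hξpos).2 (by linarith)
    linarith
end

section
/- Let 0 ≤ M ≤ 3/2 and s ≥ 0, set r = √(1 − 4M²/9), and let ξ = 1/2 + (9/2)r and ζ = 3 + 3r + s (the perturbation coefficients at the attractor fixed point 𝒫₁ of the quadratic potential). Then: (a) ξ² − 4ζ = 4·(17/8 − (15/8)r − (9/4)M² − s); (b) there exists s ≥ 0 with ξ² − 4ζ ≥ 0 (equivalently, 17/8 − (15/8)r − (9/4)M² ≥ 0) if and only if M ≤ (2/9)·√(16 − 5√7). -/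
/-!
With `M² = (9/4)(1 - r²)`, the discriminant at `s = 0` is `(81 r² - 30 r - 47) / 4`. As a quadratic
in `r` it has one negative root, `(5 - 8√7)/27`, and one positive root, `r₀ = (5 + 8√7)/27`, so for
`r ≥ 0` it is nonnegative exactly when `r ≥ r₀`. Since `r₀² = (473 + 80√7)/729`, this says
`M² ≤ (9/4)(1 - r₀²) = (4/81)(16 - 5√7)`. The discriminant decreases in `s`, so some `s' ≥ 0`
works if and only if `s' = 0` does.
-/

/-- Perturbations at the attractor of the quadratic potential.  For
`0 ≤ M ≤ 3/2`, `s ≥ 0`, `r = √(1 − 4M²/9)`, `ξ = 1/2 + (9/2)r` and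
`ζ = 3 + 3r + s`:
(a) `ξ² − 4ζ = 4(17/8 − (15/8)r − (9/4)M² − s)`;
(b) there exists `s' ≥ 0` with `ξ² − 4(3 + 3r + s') ≥ 0` (equivalently
`17/8 − (15/8)r − (9/4)M² ≥ 0`) if and only if `M ≤ (2/9)√(16 − 5√7)`. -/
theorem quadratic_perturbations (M s r ξ ζ : ℝ) (h0 : 0 ≤ M) (h1 : M ≤ 3 / 2)
    (hs : 0 ≤ s) (hr : r = Real.sqrt (1 - 4 * M ^ 2 / 9))
    (hξ : ξ = 1 / 2 + 9 / 2 * r) (hζ : ζ = 3 + 3 * r + s) :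
    (ξ ^ 2 - 4 * ζ = 4 * (17 / 8 - 15 / 8 * r - 9 / 4 * M ^ 2 - s)) ∧
    ((∃ s' : ℝ, 0 ≤ s' ∧ ξ ^ 2 - 4 * (3 + 3 * r + s') ≥ 0) ↔
      17 / 8 - 15 / 8 * r - 9 / 4 * M ^ 2 ≥ 0) ∧
    ((∃ s' : ℝ, 0 ≤ s' ∧ ξ ^ 2 - 4 * (3 + 3 * r + s') ≥ 0) ↔
      M ≤ 2 / 9 * Real.sqrt (16 - 5 * Real.sqrt 7)) := by
  have hM : 0 ≤ 1 - 4 * M ^ 2 / 9 := by nlinarith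
  have hr0 : 0 ≤ r := hr ▸ Real.sqrt_nonneg _
  have hr2 : r ^ 2 = 1 - 4 * M ^ 2 / 9 := by rw [hr, Real.sq_sqrt hM]
  have hex : (∃ s' : ℝ, 0 ≤ s' ∧ ξ ^ 2 - 4 * (3 + 3 * r + s') ≥ 0) ↔
      17 / 8 - 15 / 8 * r - 9 / 4 * M ^ 2 ≥ 0 := by
    subst hξ
    constructor
    · rintro ⟨s', hs', h⟩
      nlinarith
    · intro h
      exact ⟨0, le_rfl, by nlinarith⟩
  refine ⟨by subst hξ hζ; linear_combination (81 / 4) * hr2, hex, hex.trans ?_⟩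
  obtain ⟨q, hq⟩ : ∃ q, q = Real.sqrt 7 := ⟨_, rfl⟩
  have hq0 : 0 ≤ q := hq ▸ Real.sqrt_nonneg _
  have hq2 : q ^ 2 = 7 := by rw [hq, Real.sq_sqrt (by norm_num)]
  rw [← hq]
  have hq_lower : 5 / 2 < q := by nlinarith
  have hq_upper : q < 3 := by nlinarith
  have hA : 0 ≤ 16 - 5 * q := by nlinarith
  have hfac : 17 / 8 - 15 / 8 * r - 9 / 4 * M ^ 2
      = 81 / 16 * ((r - (5 + 8 * q) / 27) * (r - (5 - 8 * q) / 27)) := by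
    linear_combination (4 / 9) * hq2 - (81 / 16) * hr2
  have hpos : 0 < r - (5 - 8 * q) / 27 := by linarith
  have hroot : 17 / 8 - 15 / 8 * r - 9 / 4 * M ^ 2 ≥ 0 ↔ (5 + 8 * q) / 27 ≤ r := by
    rw [hfac, ge_iff_le, mul_nonneg_iff_of_pos_left (by norm_num),
      mul_nonneg_iff_of_pos_right hpos, sub_nonneg]
  have hsqrt : M ≤ 2 / 9 * Real.sqrt (16 - 5 * q) ↔ M ^ 2 ≤ 4 / 81 * (16 - 5 * q) := by
    rw [← pow_le_pow_iff_left₀ h0 (by positivity) two_ne_zero, mul_pow, Real.sq_sqrt hA]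
    norm_num
  rw [hroot, hsqrt, ← pow_le_pow_iff_left₀ (by positivity) hr0 two_ne_zero, hr2]
  constructor <;> intro h <;> nlinarith
end

section
/- Let 0 < χ ≤ π/2 and s ≥ 0, set c = cos(2(χ−π)/3), and let ξ = 2(1 − 3c) and ζ = 2 − 6c + 4c² + s (the perturbation coefficients at the attractor fixed point 𝒫₁ of the quartic potential). Then: (a) ξ² − 4ζ = 4·(5c² − 1 − s); (b) for s = 0, ξ² − 4ζ ≥ 0 if and only if χ ∈ (0, π − (3/2)arccos(−1/√5)] ∪ [π − (3/2)arccos(1/√5), π/2]; (c) for every χ with 0 < χ < π/2 and every s ≥ 0, ζ > 0 (and at χ = π/2 one has ζ = s). -/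
/-!
With `θ = 2(π - χ)/3 ∈ [π/3, 2π/3)` one has `c = cos θ`, so `θ = arccos c` and the bounds on `χ`
in (b) translate, by strict antitonicity of `arccos`, into `c ≤ -1/√5` or `1/√5 ≤ c`, that is
`5c² ≥ 1`; by (a) this is the sign condition on the discriminant for `s = 0`.
Part (c) follows from `ζ = 2(1 - c)(1 - 2c) + s`, since `c < 1/2` for `χ < π/2` and
`c = 1/2` at `χ = π/2`.
-/

/-- Perturbations at the attractor of the quartic potential.  For
`0 < χ ≤ π/2`, `s ≥ 0`, `c = cos(2(χ−π)/3)`, `ξ = 2(1 − 3c)` and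
`ζ = 2 − 6c + 4c² + s`:
(a) `ξ² − 4ζ = 4(5c² − 1 − s)`;
(b) for `s = 0`, `ξ² − 4ζ ≥ 0` iff `χ ≤ π − (3/2)arccos(−1/√5)` or
`π − (3/2)arccos(1/√5) ≤ χ`;
(c) if `χ < π/2` then `ζ > 0`, and at `χ = π/2` one has `ζ = s`. -/
theorem quartic_perturbations (χ s c ξ ζ : ℝ) (h0 : 0 < χ) (h1 : χ ≤ Real.pi / 2)
    (hs : 0 ≤ s) (hc : c = Real.cos (2 * (χ - Real.pi) / 3))
    (hξ : ξ = 2 * (1 - 3 * c)) (hζ : ζ = 2 - 6 * c + 4 * c ^ 2 + s) :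
    (ξ ^ 2 - 4 * ζ = 4 * (5 * c ^ 2 - 1 - s)) ∧
    (s = 0 → (ξ ^ 2 - 4 * ζ ≥ 0 ↔
      (χ ≤ Real.pi - 3 / 2 * Real.arccos (-1 / Real.sqrt 5) ∨
       Real.pi - 3 / 2 * Real.arccos (1 / Real.sqrt 5) ≤ χ))) ∧
    (χ < Real.pi / 2 → 0 < ζ) ∧
    (χ = Real.pi / 2 → ζ = s) := by
  -- `θ ∈ [π/3, 2π/3)` is a range on which `arccos` inverts `cos`.
  obtain ⟨θ, hθ⟩ : ∃ θ : ℝ, θ = 2 * (Real.pi - χ) / 3 := ⟨_, rfl⟩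
  have hpi := Real.pi_pos
  have hcθ : c = Real.cos θ := by
    rw [hc, hθ, ← Real.cos_neg]
    congr 1
    ring
  have hθ0 : 0 ≤ θ := by linarith
  have hθπ : θ ≤ Real.pi := by linarith
  have harc : Real.arccos c = θ := by rw [hcθ, Real.arccos_cos hθ0 hθπ]
  have hcm : c ∈ Set.Icc (-1 : ℝ) 1 := by
    rw [hcθ]
    exact Real.cos_mem_Icc θ
  have hdisc : ξ ^ 2 - 4 * ζ = 4 * (5 * c ^ 2 - 1 - s) := by
    rw [hξ, hζ]
    ring
  refine ⟨hdisc, ?_, ?_, ?_⟩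
  · intro hs0
    obtain ⟨r, hr⟩ : ∃ r : ℝ, r = 1 / Real.sqrt 5 := ⟨_, rfl⟩
    have hr0 : 0 < r := by
      rw [hr]
      positivity
    have hr2 : r ^ 2 = 1 / 5 := by
      rw [hr, div_pow, Real.sq_sqrt (by norm_num)]
      norm_num
    have hr1 : r ≤ 1 := by nlinarith
    have hleft : χ ≤ Real.pi - 3 / 2 * Real.arccos (-r) ↔ c ≤ -r := by
      rw [← Real.strictAntiOn_arccos.le_iff_ge (a := -r) (b := c)
        ⟨by linarith, by linarith⟩ hcm, harc]
      constructor <;> intro h <;> linarith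
    have hright : Real.pi - 3 / 2 * Real.arccos r ≤ χ ↔ r ≤ c := by
      rw [← Real.strictAntiOn_arccos.le_iff_ge (a := c) (b := r)
        hcm ⟨by linarith, by linarith⟩, harc]
      constructor <;> intro h <;> linarith
    rw [hdisc, hs0, neg_div, ← hr, hleft, hright]
    have habs : 4 * (5 * c ^ 2 - 1 - 0) ≥ 0 ↔ r ^ 2 ≤ c ^ 2 := by
      rw [hr2]
      constructor <;> intro h <;> linarith
    rw [habs, sq_le_sq, abs_of_pos hr0, le_abs, or_comm, le_neg]
  · intro hlt
    have hhalf : c < 1 / 2 := by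
      rw [hcθ, ← Real.cos_pi_div_three]
      exact Real.cos_lt_cos_of_nonneg_of_le_pi (by linarith) hθπ (by linarith)
    -- `ζ = 2 (1 - c) (1 - 2c) + s`, and both factors are positive for `c < 1/2`.
    rw [hζ]
    nlinarith [mul_pos (show 0 < 1 - c by linarith) (show 0 < 1 - 2 * c by linarith)]
  · intro heq
    have hhalf : c = 1 / 2 := by
      rw [hcθ, ← Real.cos_pi_div_three, hθ, heq]
      congr 1
      ring
    rw [hζ, hhalf]
    ring
end
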